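/- arXiv:math/0509720 — 2 statements merged into one kernel-verified Lean document; each statement's English description precedes it below -/
import Mathlib

section
/- Fix n ≥ 1, t > 0 and (x',y') ∈ ℝ^{n+1}×ℝ^n. If (x,y) ∈ ℝ^{n+1}×ℝ^n satisfies x_i = y_i for some i ∈ {1,…,n}, then the partial derivative ∂/∂x_i of the function x ↦ q^n_t((x,y),(x',y')) vanishes at that point: ∂q^n_t/∂x_i((x,y),(x',y')) = 0. -/
open MeasureTheory Real

/-- The centered Gaussian density with variance `t`. -/
noncomputable def gauss (t y : ℝ) : ℝ :=
  (Real.sqrt (2 * Real.pi * t))⁻¹ * Real.exp (-y ^ 2 / (2 * t))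

/-- The Gaussian cumulative distribution function `Φ_t`. -/
noncomputable def gaussCDF (t y : ℝ) : ℝ := ∫ z in Set.Iic y, gauss t z

/-- The derivative `φ'_t` of the Gaussian density. -/
noncomputable def gaussDeriv (t y : ℝ) : ℝ :=
  -y / Real.sqrt (2 * Real.pi * t ^ 3) * Real.exp (-y ^ 2 / (2 * t))

/-- The kernel `q^n_t((x,y),(x',y'))`, a `(2n+1)×(2n+1)` block determinant. -/
noncomputable def qKer (n : ℕ) (t : ℝ) (x x' : Fin (n + 1) → ℝ) (y y' : Fin n → ℝ) : ℝ :=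
  Matrix.det (Matrix.fromBlocks
    (Matrix.of fun i j : Fin (n + 1) => gauss t (x' j - x i))
    (Matrix.of fun (i : Fin (n + 1)) (j : Fin n) =>
      gaussCDF t (y' j - x i) - (if (i : ℕ) ≤ (j : ℕ) then (1 : ℝ) else 0))
    (Matrix.of fun (i : Fin n) (j : Fin (n + 1)) => gaussDeriv t (x' j - y i))
    (Matrix.of fun i j : Fin n => gauss t (y' j - y i)))

lemma gauss_hasDerivAt (t : ℝ) (ht : 0 < t) (y : ℝ) :
    HasDerivAt (gauss t) (gaussDeriv t y) y := by
  have h1 : HasDerivAt (fun y : ℝ => -y ^ 2 / (2 * t)) (-y / t) y := by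
    have := (((hasDerivAt_id y).pow 2).neg.div_const (2 * t))
    refine HasDerivAt.congr_deriv this ?_
    simp
    field_simp
  have h2 := h1.exp.const_mul (Real.sqrt (2 * Real.pi * t))⁻¹
  have hs : Real.sqrt (2 * Real.pi * t ^ 3) = Real.sqrt (2 * Real.pi * t) * t := by
    rw [show 2 * Real.pi * t ^ 3 = (2 * Real.pi * t) * t ^ 2 by ring,
      Real.sqrt_mul (by positivity), Real.sqrt_sq ht.le]
  have hp : 0 < Real.sqrt (2 * Real.pi * t) := by positivity
  refine HasDerivAt.congr_deriv h2 ?_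
  rw [gaussDeriv, hs]
  field_simp

lemma gauss_continuous (t : ℝ) : Continuous (gauss t) := by
  unfold gauss
  fun_prop

lemma gauss_integrable (t : ℝ) (ht : 0 < t) : Integrable (gauss t) := by
  have h := (integrable_exp_neg_mul_sq (b := 1 / (2 * t)) (by positivity)).const_mul
    (Real.sqrt (2 * Real.pi * t))⁻¹
  convert h using 1
  ext y
  unfold gauss
  congr 2
  ring

lemma gaussCDF_hasDerivAt (t : ℝ) (ht : 0 < t) (y : ℝ) :
    HasDerivAt (gaussCDF t) (gauss t y) y := by
  have hI := gauss_integrable t ht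
  have h1 : gaussCDF t = fun u => gaussCDF t 0 + ∫ z in (0 : ℝ)..u, gauss t z := by
    ext u
    have := intervalIntegral.integral_Iic_sub_Iic (a := 0) (b := u) (μ := volume)
      hI.integrableOn hI.integrableOn
    unfold gaussCDF
    linarith
  rw [h1]
  exact (intervalIntegral.integral_hasDerivAt_right (hI.intervalIntegrable)
    ((gauss_continuous t).stronglyMeasurableAtFilter _ _)
    (gauss_continuous t).continuousAt).const_add _

/-- If `x_i = y_i`, then `∂q^n_t/∂x_i((x,y),(x',y')) = 0`. -/
theorem stmt2 (n : ℕ) (hn : 1 ≤ n) (t : ℝ) (ht : 0 < t)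
    (x x' : Fin (n + 1) → ℝ) (y y' : Fin n → ℝ)
    (i : ℕ) (hi : i < n) (hxy : x ⟨i, by omega⟩ = y ⟨i, hi⟩) :
    deriv (fun a => qKer n t (Function.update x ⟨i, by omega⟩ a) x' y y') (x ⟨i, by omega⟩)
      = 0 := by
  set k : Fin (n + 1) := ⟨i, by omega⟩ with hk
  set l : Fin n := ⟨i, hi⟩ with hl
  let M : Matrix (Fin (n + 1) ⊕ Fin n) (Fin (n + 1) ⊕ Fin n) ℝ := Matrix.fromBlocks
    (Matrix.of fun i j : Fin (n + 1) => gauss t (x' j - x i))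
    (Matrix.of fun (i : Fin (n + 1)) (j : Fin n) =>
      gaussCDF t (y' j - x i) - (if (i : ℕ) ≤ (j : ℕ) then (1 : ℝ) else 0))
    (Matrix.of fun (i : Fin n) (j : Fin (n + 1)) => gaussDeriv t (x' j - y i))
    (Matrix.of fun i j : Fin n => gauss t (y' j - y i))
  let v : ℝ → (Fin (n + 1) ⊕ Fin n) → ℝ := fun a => Sum.elim (fun j => gauss t (x' j - a))
    (fun j => gaussCDF t (y' j - a) - (if (k : ℕ) ≤ (j : ℕ) then (1 : ℝ) else 0))
  let L : ((Fin (n + 1) ⊕ Fin n) → ℝ) →ₗ[ℝ] ℝ :=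
    (LinearMap.proj (Sum.inl k)).comp (Matrix.cramer M.transpose)
  have hL : ∀ w, L w = (M.updateRow (Sum.inl k) w).det := fun w =>
    Matrix.cramer_transpose_apply M w (Sum.inl k)
  have hq : (fun a => qKer n t (Function.update x k a) x' y y') = fun a => L (v a) := by
    ext a
    rw [hL, qKer]
    congr 1
    ext r c
    rcases r with r | r
    · by_cases hr : r = k
      · subst hr
        rcases c with c | c <;> simp [v]
      · rcases c with c | c <;> simp [M, Matrix.updateRow_apply, hr]
    · rcases c with c | c <;> simp [M, Matrix.updateRow_apply]
  have hv : HasDerivAt v (-(M (Sum.inr l))) (x k) := by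
    rw [hasDerivAt_pi]
    rintro (j | j)
    · have h := (gauss_hasDerivAt t ht (x' j - x k)).comp (x k)
        ((hasDerivAt_id (x k)).const_sub (x' j))
      refine HasDerivAt.congr_deriv h ?_
      simp [M, hxy]
    · have h := ((gaussCDF_hasDerivAt t ht (y' j - x k)).comp (x k)
        ((hasDerivAt_id (x k)).const_sub (y' j))).sub_const
          (if (k : ℕ) ≤ (j : ℕ) then (1 : ℝ) else 0)
      refine HasDerivAt.congr_deriv h ?_
      simp [M, hxy]
  have hd : HasDerivAt (fun a => L (v a)) (L (-(M (Sum.inr l)))) (x k) :=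
    (LinearMap.toContinuousLinearMap L).hasFDerivAt.comp_hasDerivAt (x k) hv
  rw [hq, hd.deriv, map_neg, hL, neg_eq_zero]
  refine Matrix.det_zero_of_row_eq (i := Sum.inl k) (j := Sum.inr l) (by simp) ?_
  ext c
  simp [Matrix.updateRow_apply]
end

section
/- Volume of the Gelfand–Tsetlin polytope: fix k ≥ 2 and x ∈ W^k. Let K(x) be the set of tuples (x^1, x^2, …, x^{k−1}) with x^j ∈ ℝ^j, such that, writing x^k = x, the interlacing inequalities x^{j+1}_i ≤ x^j_i ≤ x^{j+1}_{i+1} hold for all 1 ≤ j ≤ k−1 and 1 ≤ i ≤ j. Then the k(k−1)/2-dimensional Lebesgue measure of K(x) equals h_k(x)/∏_{j=1}^{k−1} j!. -/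
open MeasureTheory

/-- The Vandermonde product `h_m(z) = ∏_{i<j} (z_j − z_i)`. -/
noncomputable def vand (m : ℕ) (z : Fin m → ℝ) : ℝ :=
  ∏ j : Fin m, ∏ i ∈ Finset.Iio j, (z j - z i)

theorem vand_eq_det (m : ℕ) (z : Fin m → ℝ) : vand m z = (Matrix.vandermonde z).det := by
  rw [Matrix.det_vandermonde, vand]
  rw [Finset.prod_sigma', Finset.prod_sigma']
  refine Finset.prod_bij' (fun a _ => ⟨a.2, a.1⟩) (fun a _ => ⟨a.2, a.1⟩) ?_ ?_ ?_ ?_ ?_ <;> simp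

theorem vand_nonneg (m : ℕ) (z : Fin m → ℝ) (hz : Monotone z) : 0 ≤ vand m z := by
  refine Finset.prod_nonneg fun j _ => Finset.prod_nonneg fun i hi => ?_
  have := hz (Finset.mem_Iio.1 hi).le
  linarith

theorem vand_diff (m : ℕ) (x : Fin (m + 1) → ℝ) :
    vand (m + 1) x = (Matrix.of fun i j : Fin m =>
      x i.succ ^ ((j : ℕ) + 1) - x i.castSucc ^ ((j : ℕ) + 1)).det := by
  rw [vand_eq_det]
  rw [Matrix.det_eq_of_forall_row_eq_smul_add_pred
    (B := Matrix.of fun i j : Fin (m + 1) =>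
      Fin.cases (x 0 ^ (j : ℕ)) (fun i' => x i'.succ ^ (j : ℕ) - x i'.castSucc ^ (j : ℕ)) i)
    (fun _ => 1)]
  · rw [Matrix.det_succ_column_zero, Fin.sum_univ_succ]
    simp only [Matrix.of_apply, Fin.cases_zero, Fin.cases_succ, Fin.val_zero, pow_zero, sub_self,
      mul_zero, zero_mul, Finset.sum_const_zero, add_zero, one_mul, mul_one]
    congr 1
  · intro j; simp [Matrix.vandermonde]
  · intro i j; simp [Matrix.vandermonde]

def gtBox (m : ℕ) (x : Fin (m + 1) → ℝ) : Set (Fin m → ℝ) :=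
  Set.pi Set.univ fun i => Set.Icc (x i.castSucc) (x i.succ)

theorem integrable_term (m : ℕ) (x : Fin (m + 1) → ℝ) (σ : Equiv.Perm (Fin m)) :
    Integrable (fun y : Fin m → ℝ => ∏ i, y i ^ ((σ i : Fin m) : ℕ))
      (Measure.pi fun i : Fin m => (volume : Measure ℝ).restrict
        (Set.Icc (x i.castSucc) (x i.succ))) := by
  refine Integrable.fintype_prod (f := fun i (t : ℝ) => t ^ ((σ i : Fin m) : ℕ)) fun i => ?_
  exact (continuous_pow _).continuousOn.integrableOn_Icc

theorem vand_sum (m : ℕ) (y : Fin m → ℝ) :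
    vand m y = ∑ σ : Equiv.Perm (Fin m), ((Equiv.Perm.sign σ : ℤ) : ℝ) * ∏ i, y i ^ ((σ i : Fin m) : ℕ) := by
  rw [vand_eq_det, ← Matrix.det_transpose, Matrix.det_apply']
  rfl

theorem restrict_box (m : ℕ) (x : Fin (m + 1) → ℝ) :
    (volume : Measure (Fin m → ℝ)).restrict (gtBox m x) =
    (Measure.pi fun i : Fin m => (volume : Measure ℝ).restrict
        (Set.Icc (x i.castSucc) (x i.succ))) := by
  rw [gtBox, volume_pi, Measure.restrict_pi_pi]

theorem vand_integrable (m : ℕ) (x : Fin (m + 1) → ℝ) :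
    IntegrableOn (vand m) (gtBox m x) := by
  rw [IntegrableOn, restrict_box, funext (vand_sum m)]
  exact integrable_finsetSum _ fun σ _ => (integrable_term m x σ).const_mul _

theorem vand_integral (m : ℕ) (x : Fin (m + 1) → ℝ) (hx : Monotone x) :
    ∫ y in gtBox m x, vand m y = vand (m + 1) x / (m.factorial : ℝ) := by
  rw [restrict_box, funext (vand_sum m)]
  rw [integral_finsetSum _ fun σ _ => (integrable_term m x σ).const_mul _]
  simp only [integral_const_mul]
  have h1 : ∀ σ : Equiv.Perm (Fin m), ∫ y : Fin m → ℝ, ∏ i, y i ^ ((σ i : Fin m) : ℕ)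
      ∂(Measure.pi fun i : Fin m => (volume : Measure ℝ).restrict
        (Set.Icc (x i.castSucc) (x i.succ))) =
      (∏ i, (x i.succ ^ ((σ i : ℕ) + 1) - x i.castSucc ^ ((σ i : ℕ) + 1))) / (m.factorial : ℝ) := by
    intro σ
    rw [integral_fintype_prod_eq_prod (f := fun i (t : ℝ) => t ^ ((σ i : Fin m) : ℕ))]
    have h2 : ∀ i : Fin m, ∫ t in Set.Icc (x i.castSucc) (x i.succ), t ^ ((σ i : Fin m) : ℕ) =
        (x i.succ ^ ((σ i : ℕ) + 1) - x i.castSucc ^ ((σ i : ℕ) + 1)) / (((σ i : ℕ) : ℝ) + 1) := by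
      intro i
      rw [integral_Icc_eq_integral_Ioc, ← intervalIntegral.integral_of_le
        (hx (Fin.castSucc_le_succ i)), integral_pow]
    rw [Finset.prod_congr rfl fun i _ => h2 i, Finset.prod_div_distrib]
    congr 1
    rw [Equiv.prod_comp σ (fun j : Fin m => ((j : ℕ) : ℝ) + 1),
      Fin.prod_univ_eq_prod_range (fun j : ℕ => (j : ℝ) + 1), ← Finset.prod_range_add_one_eq_factorial]
    push_cast
    rfl
  simp only [h1, vand_diff]
  rw [← Matrix.det_transpose, Matrix.det_apply', Finset.sum_div]
  simp [mul_div_assoc]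

theorem box_mono (m : ℕ) (x : Fin (m + 1) → ℝ) (y : Fin m → ℝ) (hy : y ∈ gtBox m x) :
    Monotone y := by
  cases m with
  | zero => intro i; exact i.elim0
  | succ m =>
    refine Fin.monotone_iff_le_succ.2 fun i => ?_
    have h1 := (hy i.castSucc trivial).2
    have h2 := (hy i.succ trivial).1
    exact h1.trans h2

theorem box_meas (m : ℕ) (x : Fin (m + 1) → ℝ) : MeasurableSet (gtBox m x) :=
  MeasurableSet.univ_pi fun _ => measurableSet_Icc

theorem vand_lintegral (m : ℕ) (x : Fin (m + 1) → ℝ) (hx : Monotone x) (c : ℝ) (hc : 0 ≤ c) :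
    ∫⁻ y in gtBox m x, ENNReal.ofReal (vand m y / c) =
      ENNReal.ofReal (vand (m + 1) x / (c * (m.factorial : ℝ))) := by
  rw [← ofReal_integral_eq_lintegral_ofReal ((vand_integrable m x).div_const c)]
  · rw [integral_div, vand_integral m x hx, div_div, mul_comm]
  · filter_upwards [ae_restrict_mem (box_meas m x)] with y hy
    exact div_nonneg (vand_nonneg m y (box_mono m x y hy)) hc

abbrev GTRows (n : ℕ) : Type := (j : Fin n) → (Fin ((j : ℕ) + 1) → ℝ)

def GT (n : ℕ) (x : Fin (n + 1) → ℝ) : Set (GTRows n) :=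
  {p | (∀ (j : ℕ) (hj : j + 1 < n) (i : ℕ) (hi : i < j + 1),
        p ⟨j + 1, hj⟩ ⟨i, Nat.lt_succ_of_lt hi⟩ ≤ p ⟨j, Nat.lt_of_succ_lt hj⟩ ⟨i, hi⟩ ∧
        p ⟨j, Nat.lt_of_succ_lt hj⟩ ⟨i, hi⟩ ≤ p ⟨j + 1, hj⟩ ⟨i + 1, Nat.succ_lt_succ hi⟩) ∧
      (∀ (j : ℕ) (hj : j + 1 = n) (i : ℕ) (hi : i < j + 1),
        x ⟨i, by omega⟩ ≤ p ⟨j, by omega⟩ ⟨i, hi⟩ ∧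
        p ⟨j, by omega⟩ ⟨i, hi⟩ ≤ x ⟨i + 1, by omega⟩)}

theorem GT_succ (n : ℕ) (x : Fin (n + 2) → ℝ) (q : GTRows (n + 1)) :
    q ∈ GT (n + 1) x ↔ q (Fin.last n) ∈ gtBox (n + 1) x ∧
      (fun j : Fin n => q j.castSucc : GTRows n) ∈ GT n (q (Fin.last n)) := by
  constructor
  · rintro ⟨h1, h2⟩
    refine ⟨fun i _ => h2 n rfl i i.2, fun j hj i hi => h1 j (by omega) i hi, ?_⟩
    rintro j rfl i hi
    exact h1 j (by omega) i hi
  · rintro ⟨h0, h1, h2⟩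
    refine ⟨fun j hj i hi => ?_, ?_⟩
    · rcases Nat.lt_or_ge (j + 1) n with h | h
      · exact h1 j h i hi
      · obtain rfl : j + 1 = n := by omega
        exact h2 j rfl i hi
    · intro j hj i hi
      obtain rfl : j = n := by omega
      exact h0 ⟨i, hi⟩ trivial

theorem GT_meas (n : ℕ) (x : Fin (n + 1) → ℝ) : MeasurableSet (GT n x) := by
  have hm : ∀ a b, Measurable fun p : GTRows n => p a b := fun a b =>
    (measurable_pi_apply b).comp (measurable_pi_apply a)
  simp only [GT, Set.ofPred_and, Set.ofPred_forall]
  refine MeasurableSet.inter ?_ ?_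
  · exact .iInter fun j => .iInter fun hj => .iInter fun i => .iInter fun hi =>
      (measurableSet_le (hm _ _) (hm _ _)).inter (measurableSet_le (hm _ _) (hm _ _))
  · exact .iInter fun j => .iInter fun hj => .iInter fun i => .iInter fun hi =>
      (measurableSet_le measurable_const (hm _ _)).inter
        (measurableSet_le (hm _ _) measurable_const)

def gtSnoc (n : ℕ) (z : GTRows n × (Fin (n + 1) → ℝ)) : GTRows (n + 1) :=
  Fin.snoc (α := fun j : Fin (n + 1) => Fin ((j : ℕ) + 1) → ℝ) z.1 z.2

theorem gtSnoc_last (n : ℕ) (z) : gtSnoc n z (Fin.last n) = z.2 :=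
  Fin.snoc_last (α := fun j : Fin (n + 1) => Fin ((j : ℕ) + 1) → ℝ) _ _

theorem gtSnoc_castSucc (n : ℕ) (z) (j : Fin n) : gtSnoc n z j.castSucc = z.1 j :=
  Fin.snoc_castSucc (α := fun j : Fin (n + 1) => Fin ((j : ℕ) + 1) → ℝ) _ _ _

theorem gtSnoc_meas (n : ℕ) : Measurable (gtSnoc n) := by
  refine measurable_pi_iff.2 fun a => ?_
  induction a using Fin.lastCases with
  | last => simp only [gtSnoc_last]; exact measurable_snd
  | cast j =>
    simp only [gtSnoc_castSucc]
    exact (measurable_pi_apply j).comp measurable_fst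

theorem gtSnoc_mp (n : ℕ) : MeasurePreserving (gtSnoc n) := by
  refine ⟨gtSnoc_meas n, ?_⟩
  symm
  refine Measure.pi_eq fun s hs => ?_
  rw [Measure.map_apply (gtSnoc_meas n) (.univ_pi hs)]
  have : gtSnoc n ⁻¹' Set.pi Set.univ s =
      (Set.pi Set.univ fun j : Fin n => s j.castSucc) ×ˢ s (Fin.last n) := by
    ext z
    simp only [Set.mem_preimage, Set.mem_pi, Set.mem_univ, true_implies, Set.mem_prod]
    rw [Fin.forall_fin_succ']
    simp only [gtSnoc_last, gtSnoc_castSucc]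
  rw [this, Measure.volume_eq_prod, Measure.prod_prod, volume_pi, Measure.pi_pi,
    Fin.prod_univ_castSucc]

theorem GT_volume (n : ℕ) : ∀ (x : Fin (n + 1) → ℝ), Monotone x →
    volume (GT n x) =
      ENNReal.ofReal (vand (n + 1) x / ∏ j ∈ Finset.range n, ((Nat.factorial (j + 1) : ℝ))) := by
  induction n with
  | zero =>
    intro x hx
    have : GT 0 x = Set.univ := by
      ext p; simp [GT]
    rw [this, volume_pi]
    simp [vand_eq_det]
  | succ n ih =>
    intro x hx
    rw [← (gtSnoc_mp n).measure_preimage (GT_meas _ x).nullMeasurableSet, Measure.volume_eq_prod,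
      Measure.prod_apply_symm (gtSnoc_meas n (GT_meas _ x)), Finset.prod_range_succ,
      ← vand_lintegral (n + 1) x hx _ (Finset.prod_nonneg fun _ _ => by positivity),
      ← lintegral_indicator (box_meas _ x)]
    refine lintegral_congr fun y => ?_
    have hS : (fun p => (p, y)) ⁻¹' (gtSnoc n ⁻¹' GT (n + 1) x) =
        {p | y ∈ gtBox (n + 1) x ∧ p ∈ GT n y} := by
      ext p
      simp only [Set.mem_preimage, GT_succ, gtSnoc_last, gtSnoc_castSucc, Set.mem_ofPred_eq]
    rw [hS]
    by_cases hy : y ∈ gtBox (n + 1) x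
    · rw [Set.indicator_of_mem hy, ← ih y (box_mono _ x y hy)]
      simp [hy]
    · rw [Set.indicator_of_notMem hy]
      simp [hy]

/-- Volume of the Gelfand–Tsetlin polytope: for `x ∈ W^k`, the set of
Gelfand–Tsetlin patterns `(x^1, …, x^{k−1})` interlacing with top row `x^k = x`
has `k(k−1)/2`-dimensional Lebesgue measure `h_k(x) / ∏_{j=1}^{k−1} j!`. -/
theorem stmt8 (k : ℕ) (hk : 2 ≤ k) (x : Fin k → ℝ) (hx : Monotone x) :
    volume {p : (j : Fin (k - 1)) → (Fin ((j : ℕ) + 1) → ℝ) |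
      (∀ (j : ℕ) (hj : j + 1 < k - 1) (i : ℕ) (hi : i < j + 1),
        p ⟨j + 1, hj⟩ ⟨i, by first | omega | (simp only [Fin.val_mk]; omega)⟩ ≤ p ⟨j, by first | omega | (simp only [Fin.val_mk]; omega)⟩ ⟨i, hi⟩ ∧
        p ⟨j, by first | omega | (simp only [Fin.val_mk]; omega)⟩ ⟨i, hi⟩ ≤ p ⟨j + 1, hj⟩ ⟨i + 1, by first | omega | (simp only [Fin.val_mk]; omega)⟩) ∧
      (∀ (i : ℕ) (hi : i < k - 1),
        x ⟨i, by first | omega | (simp only [Fin.val_mk]; omega)⟩ ≤ p ⟨k - 2, by first | omega | (simp only [Fin.val_mk]; omega)⟩ ⟨i, by first | omega | (simp only [Fin.val_mk]; omega)⟩ ∧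
        p ⟨k - 2, by first | omega | (simp only [Fin.val_mk]; omega)⟩ ⟨i, by first | omega | (simp only [Fin.val_mk]; omega)⟩ ≤ x ⟨i + 1, by first | omega | (simp only [Fin.val_mk]; omega)⟩)} =
    ENNReal.ofReal (vand k x / ∏ j ∈ Finset.range (k - 1), ((Nat.factorial (j + 1) : ℝ))) := by
  obtain ⟨m, rfl⟩ : ∃ m, k = m + 2 := ⟨k - 2, by omega⟩
  refine Eq.trans (congrArg _ ?_) (GT_volume (m + 1) x hx)
  ext p
  constructor
  · rintro ⟨h1, h2⟩
    refine ⟨fun j hj i hi => h1 j hj i hi, fun j hj i hi => ?_⟩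
    obtain rfl : j = m := by omega
    exact h2 i hi
  · rintro ⟨h1, h2⟩
    exact ⟨fun j hj i hi => h1 j hj i hi, fun i hi => h2 m rfl i hi⟩
end
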